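/- Let f : (A,d) → (B,d) be a morphism of commutative cochain algebras over ℚ such that H(A,d) is a Poincaré duality algebra. If H(f) is injective, then f admits a homotopy retraction as a morphism of (A,d)-modules: there exist an (A,d)-module (P,d), a quasi-isomorphism of (A,d)-modules ψ : (P,d) → (B,d), and morphisms of (A,d)-modules j : (A,d) → (P,d), ρ : (P,d) → (A,d) with ψ∘j = f and ρ∘j = id_A. -/

import Mathlib

/-- `(A,d)` together with the grading `𝒜` is a (nonnegatively graded) commutative cochain
algebra over `ℚ`: a graded-commutative graded `ℚ`-algebra with a degree `+1` differential
satisfying the Leibniz rule. -/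
structure IsGradedCDGA {A : Type} [Ring A] [Algebra ℚ A]
    (𝒜 : ℕ → Submodule ℚ A) (d : A →ₗ[ℚ] A) : Prop where
  internal : DirectSum.IsInternal 𝒜
  one_mem : (1 : A) ∈ 𝒜 0
  mul_mem : ∀ i j, ∀ a ∈ 𝒜 i, ∀ b ∈ 𝒜 j, a * b ∈ 𝒜 (i + j)
  gcomm : ∀ i j, ∀ a ∈ 𝒜 i, ∀ b ∈ 𝒜 j, a * b = ((-1 : ℚ) ^ (i * j)) • (b * a)
  dd : d ∘ₗ d = 0
  d_deg : ∀ i, ∀ a ∈ 𝒜 i, d a ∈ 𝒜 (i + 1)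
  leibniz : ∀ i, ∀ a ∈ 𝒜 i, ∀ b : A, d (a * b) = d a * b + ((-1 : ℚ) ^ i) • (a * d b)

/-- Cochain-level formulation of the statement that the cohomology `H(A,d)` is a Poincaré
duality algebra of formal dimension `n`, with fundamental class represented by the cocycle
`ω ∈ Aⁿ`. -/
structure CohomologyIsPDA {A : Type} [Ring A] [Algebra ℚ A]
    (𝒜 : ℕ → Submodule ℚ A) (d : A →ₗ[ℚ] A) (n : ℕ) (ω : A) : Prop where
  cocycle : d ω = 0
  mem : ω ∈ 𝒜 n
  not_exact : ω ∉ LinearMap.range d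
  bounded : ∀ p, n < p → ∀ a ∈ 𝒜 p, d a = 0 → a ∈ LinearMap.range d
  coh_zero : ∀ a ∈ 𝒜 0, d a = 0 → a ∈ Submodule.span ℚ {(1 : A)}
  top : ∀ a ∈ 𝒜 n, d a = 0 → a ∈ Submodule.span ℚ {ω} ⊔ LinearMap.range d
  findimH : ∃ V : Submodule ℚ A, FiniteDimensional ℚ V ∧
      LinearMap.ker d ≤ V ⊔ LinearMap.range d
  duality : ∀ p, p ≤ n → ∀ a ∈ 𝒜 p, d a = 0 → a ∉ LinearMap.range d →
      ∃ b ∈ 𝒜 (n - p), d b = 0 ∧ ∃ c : ℚ, c ≠ 0 ∧ a * b - c • ω ∈ LinearMap.range d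

/-- The map `φ : A → Hom(A,ℚ)`, `φ(a)(b) = ω♯(a·b)`, associated with a linear
functional `ω♯ : A → ℚ`. -/
noncomputable def pairingMap {A : Type} [Ring A] [Algebra ℚ A] (ωs : A →ₗ[ℚ] ℚ) :
    A →ₗ[ℚ] Module.Dual ℚ A :=
  (LinearMap.llcomp ℚ A A ℚ ωs).comp (LinearMap.mul ℚ A)

theorem pairingMap_apply {A : Type} [Ring A] [Algebra ℚ A] (ωs : A →ₗ[ℚ] ℚ) (a b : A) :
    pairingMap ωs a b = ωs (a * b) := rfl

/-- The action of a homogeneous element `a ∈ A^p` on a cohomogeneous functional `f` of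
degree `r`: `(a·f)(x) = (-1)^{|a||f|} f(a·x)`. -/
noncomputable def dualAct {A : Type} [Ring A] [Algebra ℚ A]
    (p : ℕ) (a : A) (r : ℤ) (f : Module.Dual ℚ A) : Module.Dual ℚ A :=
  ((-1 : ℚ) ^ ((p : ℤ) * r)) • (f ∘ₗ LinearMap.mulLeft ℚ a)

/-- The differential on `Hom(A,ℚ)` applied to a cohomogeneous functional `f` of degree `r`:
`δf = -(-1)^{|f|} f∘d`. -/
noncomputable def dualDelta {A : Type} [Ring A] [Algebra ℚ A]
    (d : A →ₗ[ℚ] A) (r : ℤ) (f : Module.Dual ℚ A) : Module.Dual ℚ A :=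
  (-(-1 : ℚ) ^ r) • (f ∘ₗ d)

/-- A functional `f : A → ℚ` is cohomogeneous of degree `r` (for a grading `𝒜` of `A`)
if it vanishes on `𝒜 j` for all `j ≠ -r`. -/
def Cohomogeneous {A : Type} [Ring A] [Algebra ℚ A]
    (𝒜 : ℕ → Submodule ℚ A) (r : ℤ) (f : Module.Dual ℚ A) : Prop :=
  ∀ j : ℕ, (j : ℤ) ≠ -r → ∀ x ∈ 𝒜 j, f x = 0

/-- An `(A,d)`-module: a cochain complex of `ℚ`-vector spaces with a compatible `A`-action,
satisfying the Leibniz rule `d(a·m) = da·m + (-1)^{|a|} a·dm` for homogeneous `a`. -/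
structure DGModule (A : Type) [Ring A] [Algebra ℚ A]
    (𝒜 : ℕ → Submodule ℚ A) (dA : A →ₗ[ℚ] A) where
  carrier : Type
  [acg : AddCommGroup carrier]
  [modQ : Module ℚ carrier]
  act : A →ₗ[ℚ] carrier →ₗ[ℚ] carrier
  act_one : ∀ m, act 1 m = m
  act_mul : ∀ a b m, act (a * b) m = act a (act b m)
  d : carrier →ₗ[ℚ] carrier
  dd : ∀ m, d (d m) = 0
  leibniz : ∀ p, ∀ a ∈ 𝒜 p, ∀ m,
    d (act a m) = act (dA a) m + ((-1 : ℚ) ^ p) • act a (d m)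

attribute [instance] DGModule.acg DGModule.modQ

variable {A : Type} [Ring A] [Algebra ℚ A] {𝒜 : ℕ → Submodule ℚ A} {dA : A →ₗ[ℚ] A}

/-- A morphism of `(A,d)`-modules: a `ℚ`-linear map commuting with the differentials and
with the `A`-actions. -/
structure IsDGModuleHom (M N : DGModule A 𝒜 dA) (f : M.carrier →ₗ[ℚ] N.carrier) : Prop where
  comm_d : ∀ m, f (M.d m) = N.d (f m)
  equivariant : ∀ a m, f (M.act a m) = N.act a (f m)

/-- Cocycles of an `(A,d)`-module. -/
def cocycles (M : DGModule A 𝒜 dA) : Submodule ℚ M.carrier := LinearMap.ker M.d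

/-- Coboundaries, as a submodule of the cocycles. -/
def coboundaries (M : DGModule A 𝒜 dA) : Submodule ℚ (cocycles M) :=
  (LinearMap.range M.d).comap (cocycles M).subtype

/-- The cohomology `H(M)` of an `(A,d)`-module. -/
def cohomology (M : DGModule A 𝒜 dA) := cocycles M ⧸ coboundaries M

noncomputable instance (M : DGModule A 𝒜 dA) : AddCommGroup (cohomology M) :=
  inferInstanceAs (AddCommGroup (cocycles M ⧸ coboundaries M))

noncomputable instance (M : DGModule A 𝒜 dA) : Module ℚ (cohomology M) :=
  inferInstanceAs (Module ℚ (cocycles M ⧸ coboundaries M))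

theorem maps_cocycles {M N : DGModule A 𝒜 dA} {f : M.carrier →ₗ[ℚ] N.carrier}
    (hf : IsDGModuleHom M N f) : ∀ x ∈ cocycles M, f x ∈ cocycles N := by
  intro x hx
  have h := hf.comm_d x
  simp only [cocycles, LinearMap.mem_ker] at hx ⊢
  rw [← h, hx, map_zero]

theorem maps_coboundaries {M N : DGModule A 𝒜 dA} {f : M.carrier →ₗ[ℚ] N.carrier}
    (hf : IsDGModuleHom M N f) :
    coboundaries M ≤ (coboundaries N).comap (f.restrict (maps_cocycles hf)) := by
  rintro ⟨x, hx⟩ hmem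
  obtain ⟨y, hy⟩ := hmem
  refine Submodule.mem_comap.2 ⟨f y, ?_⟩
  have : f x = N.d (f y) := by
    rw [← hf.comm_d, hy]; rfl
  simpa [LinearMap.restrict_apply] using this.symm

/-- The map induced in cohomology by a morphism of `(A,d)`-modules. -/
noncomputable def cohMap {M N : DGModule A 𝒜 dA} {f : M.carrier →ₗ[ℚ] N.carrier}
    (hf : IsDGModuleHom M N f) : cohomology M →ₗ[ℚ] cohomology N :=
  Submodule.mapQ (coboundaries M) (coboundaries N)
    (f.restrict (maps_cocycles hf)) (maps_coboundaries hf)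

/-- A morphism of `(A,d)`-modules is a quasi-isomorphism if the induced map in cohomology
is an isomorphism. -/
def IsQuasiIso {M N : DGModule A 𝒜 dA} {f : M.carrier →ₗ[ℚ] N.carrier}
    (hf : IsDGModuleHom M N f) : Prop :=
  Function.Bijective (cohMap hf)

/-- A commutative cochain algebra `(A,d)` viewed as a module over itself. -/
noncomputable def selfModule (hA : IsGradedCDGA 𝒜 dA) : DGModule A 𝒜 dA where
  carrier := A
  act := LinearMap.mul ℚ A
  act_one := fun m => one_mul m
  act_mul := fun a b m => mul_assoc a b m
  d := dA
  dd := fun m => by simpa using LinearMap.ext_iff.mp hA.dd m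
  leibniz := fun p a ha m => hA.leibniz p a ha m

/-- The target of a morphism `f : (A,d) → (B,d)` of commutative cochain algebras, viewed
as an `(A,d)`-module via `a·b = f(a)b`. -/
noncomputable def pushModule {B : Type} [Ring B] [Algebra ℚ B]
    {ℬ : ℕ → Submodule ℚ B} {dB : B →ₗ[ℚ] B} (hB : IsGradedCDGA ℬ dB)
    (f : A →ₐ[ℚ] B) (hfd : ∀ a, f (dA a) = dB (f a))
    (hfdeg : ∀ i, ∀ a ∈ 𝒜 i, f a ∈ ℬ i) : DGModule A 𝒜 dA where
  carrier := B
  act := (LinearMap.mul ℚ B).comp f.toLinearMap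
  act_one := fun m => by simp
  act_mul := fun a b m => by simp [mul_assoc]
  d := dB
  dd := fun m => by simpa using LinearMap.ext_iff.mp hB.dd m
  leibniz := fun p a ha m => by
    have h := hB.leibniz p (f a) (hfdeg p a ha) m
    simp only [LinearMap.comp_apply, LinearMap.mul_apply', AlgHom.toLinearMap_apply]
    rw [hfd]
    exact h

section Helpers

/-- Linear maps agreeing on all homogeneous pieces agree. -/
theorem hr_ext {A M : Type} [Ring A] [Algebra ℚ A] [AddCommGroup M] [Module ℚ M]
    {𝒜 : ℕ → Submodule ℚ A} (h : DirectSum.IsInternal 𝒜) {u v : A →ₗ[ℚ] M}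
    (huv : ∀ i, ∀ a ∈ 𝒜 i, u a = v a) (a : A) : u a = v a := by
  have ha : a ∈ iSup 𝒜 := by rw [h.submodule_iSup_eq_top]; trivial
  induction ha using Submodule.iSup_induction' with
  | mem i x hx => exact huv i x hx
  | zero => simp
  | add x y _ _ hx hy => simp [hx, hy]

/-- The grading involution. -/
theorem hr_exists_sigma {A : Type} [Ring A] [Algebra ℚ A]
    {𝒜 : ℕ → Submodule ℚ A} (h : DirectSum.IsInternal 𝒜) :
    ∃ σ : A →ₗ[ℚ] A, ∀ i, ∀ a ∈ 𝒜 i, σ a = ((-1 : ℚ) ^ i) • a := by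
  classical
  let e := LinearEquiv.ofBijective (DirectSum.coeLinearMap 𝒜) h
  refine ⟨(DirectSum.toModule ℚ ℕ A (fun i => ((-1 : ℚ) ^ i) • (𝒜 i).subtype)) ∘ₗ
    e.symm.toLinearMap, ?_⟩
  intro i a ha
  have : e.symm a = DirectSum.lof ℚ ℕ (fun i => 𝒜 i) i ⟨a, ha⟩ := by
    rw [LinearEquiv.symm_apply_eq]
    exact (DirectSum.coeLinearMap_lof 𝒜 i ⟨a, ha⟩).symm
  simp [this]

variable {A : Type} [Ring A] [Algebra ℚ A] {𝒜 : ℕ → Submodule ℚ A} {dA : A →ₗ[ℚ] A}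

/-- Data of the grading involution with its properties. -/
structure HrSigma (𝒜 : ℕ → Submodule ℚ A) (dA σ : A →ₗ[ℚ] A) : Prop where
  hom : ∀ i, ∀ a ∈ 𝒜 i, σ a = ((-1 : ℚ) ^ i) • a
  invol : ∀ a, σ (σ a) = a
  anti : ∀ a, σ (dA a) = - dA (σ a)
  mul : ∀ a b, σ (a * b) = σ a * σ b
  leib : ∀ a b, dA (a * b) = dA a * b + σ a * dA b

theorem hr_sigma (hA : IsGradedCDGA 𝒜 dA) : ∃ σ : A →ₗ[ℚ] A, HrSigma 𝒜 dA σ := by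
  obtain ⟨σ, hσ⟩ := hr_exists_sigma hA.internal
  refine ⟨σ, hσ, ?_, ?_, ?_, ?_⟩
  · intro a
    refine hr_ext hA.internal (u := σ ∘ₗ σ) (v := LinearMap.id) ?_ a
    intro i a ha
    simp [hσ i a ha, smul_smul, ← mul_pow]
  · intro a
    refine hr_ext hA.internal (u := σ ∘ₗ dA) (v := -(dA ∘ₗ σ)) ?_ a
    intro i a ha
    simp [hσ i a ha, hσ _ _ (hA.d_deg i a ha), pow_succ]
  · intro a b
    refine hr_ext hA.internal (u := σ ∘ₗ LinearMap.mulRight ℚ b)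
      (v := LinearMap.mulRight ℚ (σ b) ∘ₗ σ) ?_ a
    intro i a ha
    refine hr_ext hA.internal (u := σ ∘ₗ LinearMap.mulLeft ℚ a)
      (v := LinearMap.mulLeft ℚ (σ a) ∘ₗ σ) ?_ b
    intro j b hb
    simp [hσ i a ha, hσ j b hb, hσ _ _ (hA.mul_mem i j a ha b hb), pow_add, smul_smul, mul_comm]
  · intro a b
    refine hr_ext hA.internal (u := dA ∘ₗ LinearMap.mulRight ℚ b)
      (v := LinearMap.mulRight ℚ b ∘ₗ dA + LinearMap.mulRight ℚ (dA b) ∘ₗ σ) ?_ a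
    intro i a ha
    simp [hσ i a ha, hA.leibniz i a ha b]

/-- Homogeneous components. -/
theorem hr_components (hA : IsGradedCDGA 𝒜 dA) : ∃ π : ℕ → A →ₗ[ℚ] A,
    (∀ i a, π i a ∈ 𝒜 i) ∧ (∀ i a, dA a = 0 → dA (π i a) = 0) ∧
    (∀ a, ∃ s : Finset ℕ, (∀ i, i ∉ s → π i a = 0) ∧ a = ∑ i ∈ s, π i a) := by
  classical
  letI := hA.internal.chooseDecomposition
  let π : ℕ → A →ₗ[ℚ] A := fun i =>
    (𝒜 i).subtype ∘ₗ DirectSum.component ℚ ℕ (fun i => 𝒜 i) i ∘ₗ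
      (DirectSum.decomposeLinearEquiv 𝒜).toLinearMap
  have hπ : ∀ i a, π i a = (DirectSum.decompose 𝒜 a i : A) := fun i a => rfl
  have hcomm : ∀ i a, dA (π i a) = π (i+1) (dA a) := by
    intro i a
    refine hr_ext hA.internal (u := dA ∘ₗ π i) (v := π (i+1) ∘ₗ dA) ?_ a
    intro j a ha
    have hd := hA.d_deg j a ha
    by_cases hij : j = i
    · subst hij
      simp [hπ, DirectSum.decompose_of_mem_same 𝒜 ha, DirectSum.decompose_of_mem_same 𝒜 hd]
    · have : j + 1 ≠ i + 1 := by omega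
      simp [hπ, DirectSum.decompose_of_mem_ne 𝒜 ha hij, DirectSum.decompose_of_mem_ne 𝒜 hd this]
  refine ⟨π, fun i a => (DirectSum.decompose 𝒜 a i).2, ?_, ?_⟩
  · intro i a ha
    rw [hcomm, ha, map_zero]
  · intro a
    refine ⟨(DirectSum.decompose 𝒜 a).support, ?_, ?_⟩
    · intro i hi
      rw [hπ]
      simpa using hi
    · exact (DirectSum.sum_support_decompose 𝒜 a).symm

theorem hr_dd (hA : IsGradedCDGA 𝒜 dA) (a : A) : dA (dA a) = 0 :=
  LinearMap.ext_iff.mp hA.dd a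

/-- Nondegeneracy (injectivity). -/
theorem hr_inj (hA : IsGradedCDGA 𝒜 dA) {n : ℕ} {ω : A} (hPD : CohomologyIsPDA 𝒜 dA n ω)
    (l : A →ₗ[ℚ] ℚ) (hl : ∀ a, l (dA a) = 0) (hω : l ω ≠ 0) (a : A) (ha : dA a = 0)
    (h : ∀ x, dA x = 0 → l (x * a) = 0) : a ∈ LinearMap.range dA := by
  classical
  obtain ⟨π, hmem, hcoc, hsum⟩ := hr_components hA
  by_contra hna
  obtain ⟨s, hs0, hs⟩ := hsum a
  have hex : ∃ p, π p a ∉ LinearMap.range dA := by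
    by_contra! hc
    apply hna
    rw [hs]
    exact Submodule.sum_mem _ fun i _ => hc i
  let p := Nat.find hex
  have hp : π p a ∉ LinearMap.range dA := Nat.find_spec hex
  have hlt : ∀ q, q < p → π q a ∈ LinearMap.range dA := fun q hq => by
    simpa using Nat.find_min hex hq
  have hpn : p ≤ n := by
    by_contra! hc
    exact hp (hPD.bounded p hc _ (hmem p a) (hcoc p a ha))
  obtain ⟨b, hb, hdb, c, hc, y, hy⟩ := hPD.duality p hpn _ (hmem p a) (hcoc p a ha) hp
  have hps : p ∈ s := by
    by_contra hc
    exact hp (by rw [hs0 p hc]; exact Submodule.zero_mem _)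
  have key : l (b * a) = l (b * π p a) := by
    conv_lhs => rw [hs]
    rw [Finset.mul_sum, map_sum]
    refine Finset.sum_eq_single_of_mem p hps ?_
    intro q _ hqp
    rcases lt_or_gt_of_ne hqp with hq | hq
    · obtain ⟨z, hz⟩ := hlt q hq
      have h1 := hA.leibniz _ b hb z
      rw [hdb, zero_mul, zero_add, hz] at h1
      have h2 := hl (b * z)
      rw [h1, map_smul, smul_eq_mul] at h2
      simpa using h2
    · have hbq := hA.mul_mem _ _ b hb _ (hmem q a)
      obtain ⟨z, hz⟩ := hPD.bounded (n - p + q) (by omega) _ hbq (by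
        rw [hA.leibniz _ b hb, hdb, hcoc q a ha]; simp)
      rw [← hz, hl]
  have h1 := h b hdb
  rw [key, hA.gcomm _ _ b hb _ (hmem p a), map_smul, smul_eq_mul] at h1
  have h2 : l (π p a * b) = 0 := by simpa using h1
  have h3 := hl y
  rw [hy, map_sub, h2, map_smul, smul_eq_mul] at h3
  simp [hc, hω] at h3

/-- Nondegeneracy (surjectivity). -/
theorem hr_surj (hA : IsGradedCDGA 𝒜 dA) {n : ℕ} {ω : A} (hPD : CohomologyIsPDA 𝒜 dA n ω)
    (σ : A →ₗ[ℚ] A) (hσ : HrSigma 𝒜 dA σ)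
    (l : A →ₗ[ℚ] ℚ) (hl : ∀ a, l (dA a) = 0) (hω : l ω ≠ 0)
    (μ : A →ₗ[ℚ] ℚ) (hμ : ∀ a, μ (dA a) = 0) :
    ∃ a, dA a = 0 ∧ ∀ x, dA x = 0 → l (x * a) = μ x := by
  classical
  obtain ⟨V, hV, hVle⟩ := hPD.findimH
  obtain ⟨C, hC⟩ := Submodule.exists_isCompl (LinearMap.range dA)
  let W : Submodule ℚ A := C ⊓ LinearMap.ker dA
  have hspan : ∀ x, dA x = 0 → ∃ w ∈ W, ∃ y, x = w + dA y := by
    intro x hx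
    have hx' : x ∈ LinearMap.range dA ⊔ C := by rw [hC.sup_eq_top]; trivial
    obtain ⟨r, ⟨y, rfl⟩, w, hw, rfl⟩ := Submodule.mem_sup.1 hx'
    refine ⟨w, ⟨hw, ?_⟩, y, add_comm _ _⟩
    simpa [hr_dd hA] using hx
  have hfin : FiniteDimensional ℚ W := by
    let pr : A →ₗ[ℚ] A := C.subtype ∘ₗ Submodule.projectionOnto C _ hC.symm
    have hle : W ≤ V.map pr := by
      rintro w ⟨hw, hwk⟩
      obtain ⟨v, hv, r, hr, hvr⟩ := Submodule.mem_sup.1 (hVle hwk)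
      refine ⟨v, hv, ?_⟩
      have h1 : pr w = w := by
        have := Submodule.projectionOnto_apply_left hC.symm ⟨w, hw⟩
        simp only [pr, LinearMap.comp_apply]
        rw [this]; rfl
      have h2 : pr r = 0 := by
        have := (Submodule.projectionOnto_apply_eq_zero_iff hC.symm).2 hr
        simp only [pr, LinearMap.comp_apply]
        rw [this]; rfl
      rw [← h1, ← hvr, map_add, h2, add_zero]
    exact Submodule.finiteDimensional_of_le hle
  have hbd : ∀ y a, dA a = 0 → l (dA y * a) = 0 := by
    intro y a ha
    have := hl (y * a)
    rwa [hσ.leib, ha, mul_zero, add_zero] at this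
  let θ : W →ₗ[ℚ] Module.Dual ℚ W :=
    LinearMap.mk₂ ℚ (fun a x => l ((x : A) * (a : A)))
      (by intros; simp [mul_add]) (by intros; simp)
      (by intros; simp [add_mul]) (by intros; simp)
  have hθ : ∀ a x : W, θ a x = l ((x : A) * (a : A)) := fun _ _ => rfl
  have hθinj : Function.Injective θ := by
    rw [← LinearMap.ker_eq_bot, LinearMap.ker_eq_bot']
    intro a ha
    have hr : (a : A) ∈ LinearMap.range dA := by
      refine hr_inj hA hPD l hl hω a a.2.2 ?_
      intro x hx
      obtain ⟨w, hw, y, rfl⟩ := hspan x hx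
      rw [add_mul, map_add, hbd y a a.2.2, add_zero]
      have := LinearMap.congr_fun ha ⟨w, hw⟩
      simpa [hθ] using this
    have := (Submodule.disjoint_def.1 hC.disjoint) a hr a.2.1
    exact Subtype.ext this
  have hθsurj : Function.Surjective θ :=
    (LinearMap.injective_iff_surjective_of_finrank_eq_finrank
      (Subspace.dual_finrank_eq (K := ℚ) (V := W)).symm).1 hθinj
  obtain ⟨a, ha⟩ := hθsurj (μ ∘ₗ W.subtype)
  refine ⟨a, a.2.2, ?_⟩
  intro x hx
  obtain ⟨w, hw, y, rfl⟩ := hspan x hx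
  rw [add_mul, map_add, hbd y a a.2.2, add_zero, map_add, hμ, add_zero]
  have := LinearMap.congr_fun ha ⟨w, hw⟩
  simpa [hθ] using this

/-- A functional vanishing on `ker d` factors through `σ d`. -/
theorem hr_factor (σ : A →ₗ[ℚ] A) (hσ : HrSigma 𝒜 dA σ)
    (μ : A →ₗ[ℚ] ℚ) (hμ : ∀ a, dA a = 0 → μ a = 0) :
    ∃ h : A →ₗ[ℚ] ℚ, ∀ x, h (σ (dA x)) = μ x := by
  have hk : LinearMap.ker (σ ∘ₗ dA) ≤ LinearMap.ker μ := by
    intro x hx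
    apply hμ
    have : σ (dA x) = 0 := hx
    rw [← hσ.invol (dA x), this, map_zero]
  have hμ' : μ ∈ LinearMap.range (σ ∘ₗ dA).dualMap := by
    rw [LinearMap.range_dualMap_eq_dualAnnihilator_ker, Submodule.mem_dualAnnihilator]
    exact fun w hw => hk hw
  obtain ⟨h, hh⟩ := hμ'
  exact ⟨h, fun x => LinearMap.congr_fun hh x⟩

/-- `Φ(b)(x) = ε(f(x) b)`. -/
noncomputable def hrPhi {B : Type} [Ring B] [Algebra ℚ B] (f : A →ₐ[ℚ] B) (ε : B →ₗ[ℚ] ℚ)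
    (b : B) : A →ₗ[ℚ] ℚ := ε ∘ₗ LinearMap.mulRight ℚ b ∘ₗ f.toLinearMap

theorem hrPhi_apply {B : Type} [Ring B] [Algebra ℚ B] (f : A →ₐ[ℚ] B) (ε : B →ₗ[ℚ] ℚ)
    (b : B) (x : A) : hrPhi f ε b x = ε (f x * b) := rfl

/-- `Φ(db)(x) = Φ(b)(σ d x)`. -/
theorem hrPhi_d (hA : IsGradedCDGA 𝒜 dA) {σ : A →ₗ[ℚ] A} (hσ : HrSigma 𝒜 dA σ)
    {B : Type} [Ring B] [Algebra ℚ B]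
    {ℬ : ℕ → Submodule ℚ B} {dB : B →ₗ[ℚ] B} (hB : IsGradedCDGA ℬ dB)
    (f : A →ₐ[ℚ] B) (hfd : ∀ a, f (dA a) = dB (f a))
    (hfdeg : ∀ i, ∀ a ∈ 𝒜 i, f a ∈ ℬ i) (ε : B →ₗ[ℚ] ℚ) (hε : ∀ b, ε (dB b) = 0)
    (b : B) (x : A) : hrPhi f ε (dB b) x = hrPhi f ε b (σ (dA x)) := by
  refine hr_ext hA.internal (u := hrPhi f ε (dB b)) (v := hrPhi f ε b ∘ₗ σ ∘ₗ dA) ?_ x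
  intro i a ha
  have h1 := hε (f a * b)
  rw [hB.leibniz i _ (hfdeg i a ha), ← hfd, map_add, map_smul, smul_eq_mul] at h1
  simp only [LinearMap.comp_apply, hσ.hom _ _ (hA.d_deg i a ha), hrPhi_apply, map_smul,
    smul_mul_assoc, smul_eq_mul, pow_succ]
  have h2 : ((-1 : ℚ) ^ i) * (-1) ^ i = 1 := by rw [← mul_pow]; simp
  linear_combination (-(-1 : ℚ)^i) * (-h1) + (-ε (f a * dB b)) * h2

/-- The module `A ⊕ cocone(Φ)`. -/
noncomputable def hrModule (hA : IsGradedCDGA 𝒜 dA) (σ : A →ₗ[ℚ] A) (hσ : HrSigma 𝒜 dA σ)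
    {B : Type} [Ring B] [Algebra ℚ B]
    {ℬ : ℕ → Submodule ℚ B} {dB : B →ₗ[ℚ] B} (hB : IsGradedCDGA ℬ dB)
    (f : A →ₐ[ℚ] B) (hfd : ∀ a, f (dA a) = dB (f a))
    (hfdeg : ∀ i, ∀ a ∈ 𝒜 i, f a ∈ ℬ i) (ε : B →ₗ[ℚ] ℚ) (hε : ∀ b, ε (dB b) = 0) :
    DGModule A 𝒜 dA where
  carrier := A × B × (A →ₗ[ℚ] ℚ)
  act := LinearMap.mk₂ ℚ (fun a m => (a * m.1, f a * m.2.1, m.2.2 ∘ₗ LinearMap.mulRight ℚ a))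
    (by
      intro a a' m
      refine Prod.ext (add_mul _ _ _) (Prod.ext (by simp [add_mul]) (LinearMap.ext fun x => ?_))
      simp [mul_add])
    (by
      intro c a m
      refine Prod.ext (by simp) (Prod.ext (by simp) (LinearMap.ext fun x => ?_))
      simp)
    (by
      intro a m m'
      refine Prod.ext (mul_add _ _ _) (Prod.ext (by simp [mul_add]) (LinearMap.ext fun x => ?_))
      simp)
    (by
      intro c a m
      refine Prod.ext (by simp) (Prod.ext (by simp) (LinearMap.ext fun x => ?_))
      simp)
  act_one := by
    intro m
    refine Prod.ext (by simp) (Prod.ext (by simp) (LinearMap.ext fun x => ?_))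
    simp
  act_mul := by
    intro a b m
    refine Prod.ext (by simp [mul_assoc]) (Prod.ext (by simp [mul_assoc])
      (LinearMap.ext fun x => ?_))
    simp [mul_assoc]
  d :=
    { toFun := fun m => (dA m.1, dB m.2.1, hrPhi f ε m.2.1 ∘ₗ σ + m.2.2 ∘ₗ σ ∘ₗ dA)
      map_add' := by
        intro m m'
        refine Prod.ext (by simp) (Prod.ext (by simp) (LinearMap.ext fun x => ?_))
        simp [hrPhi_apply, mul_add]
        ring
      map_smul' := by
        intro c m
        refine Prod.ext (by simp) (Prod.ext (by simp) (LinearMap.ext fun x => ?_))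
        simp [hrPhi_apply] }
  dd := by
    intro m
    refine Prod.ext (hr_dd hA _) (Prod.ext (hr_dd hB _) (LinearMap.ext fun x => ?_))
    have h1 := hrPhi_d hA hσ hB f hfd hfdeg ε hε m.2.1 (σ x)
    simp only [LinearMap.coe_mk, AddHom.coe_mk, LinearMap.add_apply, LinearMap.comp_apply]
    rw [h1]
    have h2 : σ (dA (σ x)) = - (dA x) := by rw [hσ.anti, hσ.invol]
    have h3 : dA (σ (dA x)) = 0 := by
      have := hσ.anti (dA x)
      rw [hr_dd hA, map_zero] at this
      simpa using this.symm
    simp [h2, h3, hσ.invol]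
  leibniz := by
    intro p a ha m
    refine Prod.ext (by simp [hA.leibniz p a ha]) (Prod.ext ?_ (LinearMap.ext fun x => ?_))
    · simp [hB.leibniz p _ (hfdeg p a ha), hfd]
    · have h2 : ((-1 : ℚ) ^ p) * (-1) ^ p = 1 := by rw [← mul_pow]; simp
      have e1 : σ (dA (x * a)) =
          ((-1 : ℚ) ^ p) • (σ (dA x) * a) - ((-1 : ℚ) ^ p) • (x * dA a) := by
        rw [hσ.leib, map_add, hσ.mul, hσ.mul, hσ.invol, hσ.hom p a ha,
          hσ.hom _ _ (hA.d_deg p a ha), pow_succ]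
        simp [sub_eq_add_neg]
      have e2 : σ (x * a) = ((-1 : ℚ) ^ p) • (σ x * a) := by
        rw [hσ.mul, hσ.hom p a ha]; simp
      simp only [LinearMap.mk₂_apply, LinearMap.coe_mk, AddHom.coe_mk, LinearMap.add_apply,
        LinearMap.comp_apply, LinearMap.mulRight_apply, Prod.snd_add, Prod.smul_snd,
        LinearMap.smul_apply, hrPhi_apply, e1, e2, map_sub, map_smul, map_mul, smul_eq_mul,
        smul_mul_assoc, mul_assoc]
      linear_combination (-(ε (f (σ x) * (f a * m.2.1))) - m.2.2 (σ (dA x) * a)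
        + m.2.2 (x * dA a)) * h2

end Helpers

/-- Let `f : (A,d) → (B,d)` be a morphism of commutative cochain algebras such that
`H(A,d)` is a Poincaré duality algebra.  If `H(f)` is injective, then `f` admits a
homotopy retraction as a morphism of `(A,d)`-modules: there are an `(A,d)`-module `P`,
a quasi-isomorphism of `(A,d)`-modules `ψ : P → B` and morphisms of `(A,d)`-modules
`j : A → P`, `ρ : P → A` with `ψ∘j = f` and `ρ∘j = id`. -/
theorem homotopy_retraction_of_coh_injective {B : Type} [Ring B] [Algebra ℚ B]
    (hA : IsGradedCDGA 𝒜 dA)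
    {ℬ : ℕ → Submodule ℚ B} {dB : B →ₗ[ℚ] B} (hB : IsGradedCDGA ℬ dB)
    (f : A →ₐ[ℚ] B) (hfd : ∀ a, f (dA a) = dB (f a))
    (hfdeg : ∀ i, ∀ a ∈ 𝒜 i, f a ∈ ℬ i)
    (n : ℕ) (ω : A) (hPD : CohomologyIsPDA 𝒜 dA n ω)
    (hinj : ∀ a, dA a = 0 → f a ∈ LinearMap.range dB → a ∈ LinearMap.range dA) :
    ∃ (P : DGModule A 𝒜 dA)
      (j : (selfModule hA).carrier →ₗ[ℚ] P.carrier)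
      (ρ : P.carrier →ₗ[ℚ] (selfModule hA).carrier)
      (ψ : P.carrier →ₗ[ℚ] (pushModule hB f hfd hfdeg).carrier)
      (_ : IsDGModuleHom (selfModule hA) P j)
      (_ : IsDGModuleHom P (selfModule hA) ρ)
      (hψ : IsDGModuleHom P (pushModule hB f hfd hfdeg) ψ),
      IsQuasiIso hψ ∧ ψ ∘ₗ j = f.toLinearMap ∧ ρ ∘ₗ j = LinearMap.id := by
  classical
  obtain ⟨σ, hσ⟩ := hr_sigma hA
  have hfω : f ω ∉ LinearMap.range dB := fun h => hPD.not_exact (hinj ω hPD.cocycle h)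
  obtain ⟨ε, hεω, hε'⟩ := Submodule.exists_le_ker_of_notMem hfω
  have hε : ∀ b, ε (dB b) = 0 := fun b => hε' ⟨b, rfl⟩
  let l : A →ₗ[ℚ] ℚ := ε ∘ₗ f.toLinearMap
  have hl : ∀ a, l (dA a) = 0 := fun a => by simp [l, hfd, hε]
  have hlω : l ω ≠ 0 := hεω
  have hlmul : ∀ x a, hrPhi f ε (f a) x = l (x * a) := fun x a => by simp [l, hrPhi_apply]
  have hΦd := hrPhi_d hA hσ hB f hfd hfdeg ε hε
  have hσk : ∀ x, dA x = 0 → dA (σ x) = 0 := fun x hx => by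
    have := hσ.anti x
    rw [hx, map_zero] at this
    simpa using this.symm
  have hσd : ∀ x, ∃ y, dA y = σ (dA x) := fun x => ⟨-σ x, by rw [hσ.anti, map_neg]⟩
  let P := hrModule hA σ hσ hB f hfd hfdeg ε hε
  let j : A →ₗ[ℚ] A × B × (A →ₗ[ℚ] ℚ) := LinearMap.inl ℚ A (B × (A →ₗ[ℚ] ℚ))
  let ρ : A × B × (A →ₗ[ℚ] ℚ) →ₗ[ℚ] A := LinearMap.fst ℚ A (B × (A →ₗ[ℚ] ℚ))
  let ψ : A × B × (A →ₗ[ℚ] ℚ) →ₗ[ℚ] B :=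
    f.toLinearMap ∘ₗ ρ + LinearMap.fst ℚ B (A →ₗ[ℚ] ℚ) ∘ₗ LinearMap.snd ℚ A (B × (A →ₗ[ℚ] ℚ))
  have hψa : ∀ m, ψ m = f m.1 + m.2.1 := fun m => rfl
  have hPd : ∀ m : A × B × (A →ₗ[ℚ] ℚ),
      P.d m = (dA m.1, dB m.2.1, hrPhi f ε m.2.1 ∘ₗ σ + m.2.2 ∘ₗ σ ∘ₗ dA) := fun m => rfl
  have hj : IsDGModuleHom (selfModule hA) P j := by
    constructor
    · intro m
      refine Prod.ext rfl (Prod.ext (map_zero dB).symm (LinearMap.ext fun x => ?_))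
      change (0 : ℚ) = ε (f (σ x) * 0) + 0
      simp
    · intro a m
      refine Prod.ext rfl (Prod.ext (mul_zero _).symm (LinearMap.ext fun x => ?_))
      rfl
  have hρ : IsDGModuleHom P (selfModule hA) ρ := ⟨fun m => rfl, fun a m => rfl⟩
  have hψ : IsDGModuleHom P (pushModule hB f hfd hfdeg) ψ := by
    constructor
    · intro m
      change f (dA m.1) + dB m.2.1 = dB (f m.1 + m.2.1)
      rw [map_add, hfd]
    · intro a m
      change f (a * m.1) + f a * m.2.1 = f a * (f m.1 + m.2.1)
      rw [map_mul, mul_add]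
  refine ⟨P, j, ρ, ψ, hj, hρ, hψ, ⟨?_, ?_⟩, ?_, ?_⟩
  · -- injectivity
    rw [← LinearMap.ker_eq_bot, LinearMap.ker_eq_bot']
    intro q hq
    obtain ⟨⟨m, hm⟩, rfl⟩ := Submodule.Quotient.mk_surjective _ q
    have hq' := (Submodule.Quotient.mk_eq_zero _).1 hq
    obtain ⟨β, hβ⟩ := hq'
    refine (Submodule.Quotient.mk_eq_zero _).2 ?_
    obtain ⟨a, b, h⟩ := m
    change B at β
    change dB β = f a + b at hβ
    have hm' : P.d (a, b, h) = 0 := hm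
    rw [hPd] at hm'
    have ha : dA a = 0 := congrArg Prod.fst hm'
    have hh : ∀ x, hrPhi f ε b (σ x) + h (σ (dA x)) = 0 := fun x =>
      LinearMap.congr_fun (congrArg (fun t => t.2.2) hm') x
    have hb : b = dB β - f a := by rw [hβ]; abel
    have hΦadd : ∀ u v x, hrPhi f ε (u - v) x = hrPhi f ε u x - hrPhi f ε v x := by
      intro u v x; simp [hrPhi_apply, mul_sub]
    have haex : a ∈ LinearMap.range dA := by
      refine hr_inj hA hPD l hl hlω a ha ?_
      intro x hx
      have h1 := hh (σ x)
      rw [hσ.invol, hσk x hx, map_zero, map_zero, add_zero, hb, hΦadd, hΦd, hx, map_zero,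
        map_zero, hlmul] at h1
      simpa using h1
    obtain ⟨α, rfl⟩ := haex
    have hb2 : b = dB (β - f α) := by rw [hb, map_sub, hfd]
    set γ := β - f α with hγ
    -- the functional h∘σ - Φ(γ)
    obtain ⟨a', ha', ha'2⟩ := hr_surj hA hPD σ hσ l hl hlω (h ∘ₗ σ - hrPhi f ε γ) (by
      intro y
      have h1 := hh y
      rw [hb2, hΦd, hσ.anti, map_neg, hσ.invol] at h1
      simp only [LinearMap.sub_apply, LinearMap.comp_apply, map_neg] at h1 ⊢
      linarith)
    obtain ⟨h', hh'⟩ := hr_factor σ hσ (h - hrPhi f ε (γ + f a') ∘ₗ σ) (by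
      intro x hx
      have h1 := ha'2 (σ x) (hσk x hx)
      simp only [LinearMap.sub_apply, LinearMap.comp_apply, hσ.invol] at h1 ⊢
      rw [← hlmul] at h1
      simp only [hrPhi_apply, mul_add, map_add] at h1 ⊢
      linarith)
    refine ⟨(α, γ + f a', h'), ?_⟩
    rw [hPd]
    refine Prod.ext rfl (Prod.ext ?_ (LinearMap.ext fun x => ?_))
    · change dB (γ + f a') = b
      rw [map_add, ← hfd, ha', map_zero, add_zero, hb2]
    · change hrPhi f ε (γ + f a') (σ x) + h' (σ (dA x)) = h x
      rw [hh']
      simp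
  · -- surjectivity
    intro q
    obtain ⟨⟨b, hb⟩, rfl⟩ := Submodule.Quotient.mk_surjective _ q
    change B at b
    have hb' : dB b = 0 := hb
    obtain ⟨a, ha, ha2⟩ := hr_surj hA hPD σ hσ l hl hlω (hrPhi f ε b) (by
      intro y
      have h1 := hΦd b (σ y)
      rw [hb', hσ.anti, hσ.invol] at h1
      simpa [hrPhi_apply] using h1.symm)
    obtain ⟨h, hh⟩ := hr_factor σ hσ (-(hrPhi f ε (b - f a) ∘ₗ σ)) (by
      intro x hx
      have h1 := ha2 (σ x) (hσk x hx)
      rw [← hlmul] at h1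
      simp only [LinearMap.neg_apply, LinearMap.comp_apply]
      simp only [hrPhi_apply, mul_sub, map_sub] at h1 ⊢
      linarith)
    have hm : P.d (a, b - f a, h) = 0 := by
      rw [hPd]
      refine Prod.ext ha (Prod.ext ?_ (LinearMap.ext fun x => ?_))
      · change dB (b - f a) = 0
        rw [map_sub, hb', ← hfd, ha, map_zero, sub_zero]
      · change hrPhi f ε (b - f a) (σ x) + h (σ (dA x)) = 0
        rw [hh]
        simp
    refine ⟨Submodule.Quotient.mk ⟨(a, b - f a, h), hm⟩, ?_⟩
    refine congrArg (Submodule.Quotient.mk) (Subtype.ext ?_)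
    change f a + (b - f a) = b
    abel
  · refine LinearMap.ext fun a => ?_
    change f a + 0 = f a
    rw [add_zero]
  · exact LinearMap.ext fun a => rfl
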